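/- Let w₁, w₂, a > 0 and define G₂(a,w,t) = e^{(w₁+w₂−a)t}/((e^{w₁t}−1)(e^{w₂t}−1)) − 1/(w₁w₂t²) for t > 0. Then for every real σ with 1 < σ < 2, the function t ↦ G₂(a,w,t) t^{σ−1} is (Lebesgue) integrable on (0,∞). -/

import Mathlib

open MeasureTheory Real Set

/-- The Barnes `G₂` kernel:
`G₂(a, w, t) = e^{(w₁+w₂−a)t}/((e^{w₁t}−1)(e^{w₂t}−1)) − 1/(w₁w₂t²)`. -/
noncomputable def G₂ (a w₁ w₂ t : ℝ) : ℝ :=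
  Real.exp ((w₁ + w₂ - a) * t) / ((Real.exp (w₁ * t) - 1) * (Real.exp (w₂ * t) - 1))
    - 1 / (w₁ * w₂ * t ^ 2)

/-!
The factor `1 / (1 - e^{-x})` differs from its polar part `1 / x` by at most `1` on all of
`ℝ \ {0}`. With `x = w t` it is therefore `1 / (w t) + O(1)` at `0` and `O(e^{min(w, 0)t})` at
infinity. In `G₂(a, w, t) = e^{-at} / ((1 - e^{-w₁t})(1 - e^{-w₂t})) - 1 / (w₁w₂t²)` the double
poles at `0` cancel, leaving `O(1/t)`; at infinity the first term decays exponentially, leaving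
`O(1/t²)`. These two bounds make the Mellin integral converge for `1 < σ < 2`.
-/

open Asymptotics Filter Topology

section InvOneSubExpNeg

lemma abs_inv_one_sub_exp_neg_sub_inv_le_one {x : ℝ} (hx : x ≠ 0) :
    |(1 - exp (-x))⁻¹ - x⁻¹| ≤ 1 := by
  have hden : 0 < x * (1 - exp (-x)) := by
    rcases hx.lt_or_gt with hneg | hpos
    · exact mul_pos_of_neg_of_neg hneg (sub_neg.2 (one_lt_exp_iff.2 (neg_pos.2 hneg)))
    · exact mul_pos hpos (sub_pos.2 (exp_lt_one_iff.2 (neg_neg_of_pos hpos)))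
  have hfactor : 1 - exp (-x) ≠ 0 := right_ne_zero_of_mul hden.ne'
  have hdiff : (1 - exp (-x))⁻¹ - x⁻¹ = (x - 1 + exp (-x)) / (x * (1 - exp (-x))) := by
    field_simp
    ring
  have hlower : 1 - x ≤ exp (-x) := one_sub_le_exp_neg x
  have hupper : (x + 1) * exp (-x) ≤ 1 := by
    simpa [← exp_add] using mul_le_mul_of_nonneg_right (add_one_le_exp x) (exp_pos (-x)).le
  rw [hdiff, abs_of_nonneg (div_nonneg (by linarith) hden.le), div_le_one hden]
  linarith

lemma inv_one_sub_exp_neg_eq_neg_exp_mul (x : ℝ) :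
    (1 - exp (-x))⁻¹ = -(exp x * (1 - exp x)⁻¹) := by
  have hfactor : 1 - exp (-x) = -((exp x)⁻¹ * (1 - exp x)) := by
    rw [exp_neg]
    field_simp
    ring
  rw [hfactor, inv_neg, mul_inv, inv_inv]

variable {w : ℝ}

lemma isBigO_inv_one_sub_exp_neg_mul_sub_inv (hw : w ≠ 0) :
    (fun t : ℝ ↦ (1 - exp (-(w * t)))⁻¹ - (w * t)⁻¹) =O[𝓟 {0}ᶜ] fun _ ↦ (1 : ℝ) :=
  IsBigO.of_bound' <| eventually_principal.2 fun t (ht : t ≠ 0) ↦ by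
    simpa using abs_inv_one_sub_exp_neg_sub_inv_le_one (mul_ne_zero hw ht)

lemma isBigO_inv_mul (w : ℝ) (l : Filter ℝ) : (fun t ↦ (w * t)⁻¹) =O[l] fun t ↦ t⁻¹ := by
  simpa only [mul_inv] using isBigO_const_mul_self w⁻¹ (fun t : ℝ ↦ t⁻¹) l

lemma isBigO_inv_one_sub_exp_neg_mul_nhdsNE_zero (hw : w ≠ 0) :
    (fun t : ℝ ↦ (1 - exp (-(w * t)))⁻¹) =O[𝓝[≠] 0] fun t ↦ t⁻¹ := by
  have hone : (fun _ : ℝ ↦ (1 : ℝ)) =O[𝓝[≠] 0] fun t ↦ t⁻¹ :=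
    ((isLittleO_const_left_of_ne one_ne_zero).2 tendsto_norm_inv_nhdsNE_zero_atTop).isBigO
  have hremainder := ((isBigO_inv_one_sub_exp_neg_mul_sub_inv hw).mono inf_le_right).trans hone
  exact (hremainder.add (isBigO_inv_mul w _)).congr_left fun t ↦ sub_add_cancel _ _

lemma isBigO_inv_one_sub_exp_neg_mul_atTop_one (hw : w ≠ 0) :
    (fun t : ℝ ↦ (1 - exp (-(w * t)))⁻¹) =O[atTop] fun _ ↦ (1 : ℝ) := by
  have hremainder := (isBigO_inv_one_sub_exp_neg_mul_sub_inv hw).mono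
    (le_principal_iff.2 (eventually_ne_atTop 0))
  have hpolar := (isBigO_inv_mul w atTop).trans (tendsto_inv_atTop_zero.isBigO_one ℝ)
  exact (hremainder.add hpolar).congr_left fun t ↦ sub_add_cancel _ _

lemma isBigO_inv_one_sub_exp_neg_mul_atTop (hw : w ≠ 0) :
    (fun t : ℝ ↦ (1 - exp (-(w * t)))⁻¹) =O[atTop] fun t ↦ exp (min w 0 * t) := by
  rcases hw.lt_or_gt with hneg | hpos
  · have hbounded := isBigO_inv_one_sub_exp_neg_mul_atTop_one (neg_ne_zero.2 hw)
    simp only [neg_mul, neg_neg] at hbounded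
    simpa only [min_eq_left hneg.le, inv_one_sub_exp_neg_eq_neg_exp_mul, mul_one] using
      ((isBigO_refl (fun t ↦ exp (w * t)) atTop).mul hbounded).neg_left
  · simpa only [min_eq_right hpos.le, zero_mul, exp_zero] using
      isBigO_inv_one_sub_exp_neg_mul_atTop_one hw

end InvOneSubExpNeg

lemma isBigO_exp_mul_sub_one (c : ℝ) : (fun t ↦ exp (c * t) - 1) =O[𝓝 0] fun t ↦ t := by
  have hderiv : HasDerivAt (fun t ↦ exp (c * t)) (exp (c * 0) * (c * 1)) 0 :=
    ((hasDerivAt_id 0).const_mul c).exp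
  simpa using hderiv.isBigO_sub

lemma isBigO_inv_mul_inv_mul (w₁ w₂ : ℝ) (l : Filter ℝ) :
    (fun t ↦ (w₁ * t)⁻¹ * (w₂ * t)⁻¹) =O[l] fun t ↦ t⁻¹ * t⁻¹ :=
  (isBigO_inv_mul w₁ l).mul (isBigO_inv_mul w₂ l)

section G₂

lemma G₂_eq (a w₁ w₂ t : ℝ) :
    G₂ a w₁ w₂ t = exp (-a * t) * ((1 - exp (-(w₁ * t)))⁻¹ * (1 - exp (-(w₂ * t)))⁻¹) -
      (w₁ * t)⁻¹ * (w₂ * t)⁻¹ := by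
  have hfactor (x : ℝ) : (1 - exp (-x))⁻¹ = exp x / (exp x - 1) := by
    rw [inv_one_sub_exp_neg_eq_neg_exp_mul, ← mul_neg, ← inv_neg, neg_sub, div_eq_mul_inv]
  have hexp : exp ((w₁ + w₂ - a) * t) = exp (-a * t) * (exp (w₁ * t) * exp (w₂ * t)) := by
    rw [← exp_add, ← exp_add]
    ring_nf
  rw [G₂, hfactor, hfactor, hexp, div_mul_div_comm, mul_div_assoc]
  ring

variable {a w₁ w₂ : ℝ}

lemma continuousOn_G₂ (hw₁ : w₁ ≠ 0) (hw₂ : w₂ ≠ 0) :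
    ContinuousOn (G₂ a w₁ w₂) {0}ᶜ := by
  have hexp {w t : ℝ} (hw : w ≠ 0) (ht : t ≠ 0) : exp (w * t) - 1 ≠ 0 :=
    sub_ne_zero.2 <| (exp_eq_one_iff _).not.2 (mul_ne_zero hw ht)
  refine ContinuousOn.sub (ContinuousOn.div ?_ ?_ ?_) (ContinuousOn.div ?_ ?_ ?_)
  any_goals fun_prop
  · exact fun t ht ↦ mul_ne_zero (hexp hw₁ ht) (hexp hw₂ ht)
  · exact fun t ht ↦ mul_ne_zero (mul_ne_zero hw₁ hw₂) (pow_ne_zero 2 ht)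

lemma isBigO_G₂_nhdsNE_zero (hw₁ : w₁ ≠ 0) (hw₂ : w₂ ≠ 0) :
    G₂ a w₁ w₂ =O[𝓝[≠] 0] fun t ↦ t⁻¹ := by
  set h₁ := fun t ↦ (1 - exp (-(w₁ * t)))⁻¹
  set h₂ := fun t ↦ (1 - exp (-(w₂ * t)))⁻¹
  have hprod : (fun t ↦ h₁ t * h₂ t - (w₁ * t)⁻¹ * (w₂ * t)⁻¹) =O[𝓝[≠] 0] fun t ↦ t⁻¹ := by
    have hleft := ((isBigO_inv_one_sub_exp_neg_mul_sub_inv hw₁).mono inf_le_right).mul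
      (isBigO_inv_one_sub_exp_neg_mul_nhdsNE_zero hw₂)
    have hright := (isBigO_inv_mul w₁ (𝓝[≠] 0)).mul
      ((isBigO_inv_one_sub_exp_neg_mul_sub_inv hw₂).mono inf_le_right)
    simp only [one_mul, mul_one] at hleft hright
    exact (hleft.add hright).congr_left fun t ↦ by ring
  have hexp : (fun t ↦ exp (-a * t)) =O[𝓝[≠] 0] fun _ ↦ (1 : ℝ) :=
    ((by fun_prop : ContinuousAt (fun t ↦ exp (-a * t)) 0).tendsto.isBigO_one ℝ).mono inf_le_left
  have hpole : (fun t ↦ (exp (-a * t) - 1) * ((w₁ * t)⁻¹ * (w₂ * t)⁻¹)) =O[𝓝[≠] 0]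
      fun t ↦ t⁻¹ :=
    (((isBigO_exp_mul_sub_one (-a)).mono inf_le_left).mul (isBigO_inv_mul_inv_mul w₁ w₂ _)).congr'
      .rfl <| eventually_mem_nhdsWithin.mono fun t ht ↦ mul_inv_cancel_left₀ ht _
  have hbounded := hexp.mul hprod
  simp only [one_mul] at hbounded
  refine (hbounded.add hpole).congr_left fun t ↦ ?_
  rw [G₂_eq]
  ring

lemma isBigO_G₂_atTop (hw₁ : w₁ ≠ 0) (hw₂ : w₂ ≠ 0) (ha : min w₁ 0 + min w₂ 0 < a) :
    G₂ a w₁ w₂ =O[atTop] fun t ↦ t ^ (-2 : ℝ) := by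
  have hexp := (isBigO_refl (fun t ↦ exp (-a * t)) atTop).mul
    ((isBigO_inv_one_sub_exp_neg_mul_atTop hw₁).mul (isBigO_inv_one_sub_exp_neg_mul_atTop hw₂))
  have hdecay : (fun t ↦ exp (-a * t) * (exp (min w₁ 0 * t) * exp (min w₂ 0 * t))) =O[atTop]
      fun t ↦ t ^ (-2 : ℝ) :=
    (isLittleO_exp_neg_mul_rpow_atTop (sub_pos.2 ha) (-2)).isBigO.congr_left fun t ↦ by
      rw [← exp_add, ← exp_add]
      ring_nf
  have hpole : (fun t ↦ (w₁ * t)⁻¹ * (w₂ * t)⁻¹) =O[atTop] fun t ↦ t ^ (-2 : ℝ) :=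
    (isBigO_inv_mul_inv_mul w₁ w₂ atTop).congr_right fun t ↦ by
      rw [rpow_neg_ofNat, zpow_neg, zpow_ofNat, sq, mul_inv]
  exact ((hexp.trans hdecay).sub hpole).congr_left fun t ↦ (G₂_eq a w₁ w₂ t).symm

end G₂

theorem stmt5_general {w₁ w₂ a σ : ℝ} (hw₁ : w₁ ≠ 0) (hw₂ : w₂ ≠ 0)
    (ha : min w₁ 0 + min w₂ 0 < a) (hσ : 1 < σ) (hσ' : σ < 2) :
    IntegrableOn (fun t : ℝ ↦ G₂ a w₁ w₂ t * t ^ (σ - 1)) (Ioi 0) := by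
  have hlocal : LocallyIntegrableOn (G₂ a w₁ w₂) (Ioi 0) :=
    ((continuousOn_G₂ hw₁ hw₂).mono fun _ ht ↦ (mem_Ioi.1 ht).ne').locallyIntegrableOn
      measurableSet_Ioi
  have hzero : G₂ a w₁ w₂ =O[𝓝[>] 0] fun t ↦ t ^ (-1 : ℝ) := by
    simpa only [rpow_neg_one] using
      (isBigO_G₂_nhdsNE_zero hw₁ hw₂).mono (nhdsGT_le_nhdsNE 0)
  simpa only [mul_comm] using
    mellin_convergent_of_isBigO_scalar hlocal (isBigO_G₂_atTop hw₁ hw₂ ha) hσ' hzero hσ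

theorem stmt5 (w₁ w₂ a : ℝ) (hw₁ : 0 < w₁) (hw₂ : 0 < w₂) (ha : 0 < a)
    (σ : ℝ) (hσ : 1 < σ) (hσ' : σ < 2) :
    MeasureTheory.IntegrableOn (fun t : ℝ => G₂ a w₁ w₂ t * t ^ (σ - 1))
      (Set.Ioi (0 : ℝ)) :=
  stmt5_general hw₁.ne' hw₂.ne' (by simpa [hw₁.le, hw₂.le] using ha) hσ hσ'
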